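/- Let R be a commutative noetherian ring and (C, W) a hereditary cotorsion pair cogenerated by a class P of pure-injective R-modules of finite injective dimension. Then for every M ∈ C and every associated prime p of M, the residue field k(p) of R_p belongs to C. -/

import Mathlib

open CategoryTheory Opposite

noncomputable section

/-- Vanishing of the `n`-th Ext group of two `R`-modules. -/
def extV (R : Type) [Ring R] (M N : ModuleCat.{0} R) (n : ℕ) : Prop :=
  Subsingleton (((_root_.Ext ℤ (ModuleCat.{0} R) n).obj (op M)).obj N)

/-- The left `Ext^1`-orthogonal class. -/
def leftPerp1 (R : Type) [Ring R] (𝒳 : Set (ModuleCat.{0} R)) : Set (ModuleCat.{0} R) :=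
  {M | ∀ X ∈ 𝒳, extV R M X 1}

/-- The right `Ext^1`-orthogonal class. -/
def rightPerp1 (R : Type) [Ring R] (𝒳 : Set (ModuleCat.{0} R)) : Set (ModuleCat.{0} R) :=
  {N | ∀ X ∈ 𝒳, extV R X N 1}

/-- `(𝒞, 𝒲)` is a cotorsion pair. -/
def IsCotorsionPair (R : Type) [Ring R] (𝒞 𝒲 : Set (ModuleCat.{0} R)) : Prop :=
  𝒞 = leftPerp1 R 𝒲 ∧ 𝒲 = rightPerp1 R 𝒞

/-- `(𝒞, 𝒲)` is a hereditary cotorsion pair. -/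
def IsHereditaryCotorsionPair (R : Type) [Ring R] (𝒞 𝒲 : Set (ModuleCat.{0} R)) : Prop :=
  IsCotorsionPair R 𝒞 𝒲 ∧ ∀ X ∈ 𝒞, ∀ Y ∈ 𝒲, ∀ i : ℕ, 1 ≤ i → extV R X Y i

/-- The class `𝒞_(i) = {M ∣ Ext^j(M, W) = 0 for all j > i and all W ∈ 𝒲}`. -/
def cotShift (R : Type) [Ring R] (𝒲 : Set (ModuleCat.{0} R)) (i : ℕ) : Set (ModuleCat.{0} R) :=
  {M | ∀ Y ∈ 𝒲, ∀ j : ℕ, i < j → extV R M Y j}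

/-- `f : A →ₗ[R] B` is a pure monomorphism. -/
def IsPureMono (R : Type) [CommRing R] {A B : Type} [AddCommGroup A] [Module R A]
    [AddCommGroup B] [Module R B] (f : A →ₗ[R] B) : Prop :=
  Function.Injective f ∧
    ∀ (Q : Type) [AddCommGroup Q] [Module R Q], Function.Injective (LinearMap.lTensor Q f)

/-- An `R`-module `N` is pure-injective if it is injective with respect to
pure monomorphisms. -/
def PureInjective (R : Type) [CommRing R] (N : Type) [AddCommGroup N] [Module R N] : Prop :=
  ∀ (A B : Type) [AddCommGroup A] [Module R A] [AddCommGroup B] [Module R B]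
    (f : A →ₗ[R] B), IsPureMono R f → ∀ g : A →ₗ[R] N, ∃ h : B →ₗ[R] N, h.comp f = g

/-- `N` has injective dimension at most `n`: all Ext-groups above degree `n` vanish. -/
def injDimLE (R : Type) [Ring R] (N : ModuleCat.{0} R) (n : ℕ) : Prop :=
  ∀ M : ModuleCat.{0} R, ∀ j : ℕ, n < j → extV R M N j

/-- The class of pure-injective `R`-modules of finite injective dimension. -/
def PIFinInj (R : Type) [CommRing R] : Set (ModuleCat.{0} R) :=
  {N | PureInjective R ↥N ∧ ∃ n : ℕ, injDimLE R N n}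

/-- The depth of a module over a commutative noetherian local ring, as the infimum of
the degrees in which `Ext(k, M)` does not vanish (`⊤` if all vanish). -/
def rdepth (A : Type) [CommRing A] [IsLocalRing A] (M : Type) [AddCommGroup M]
    [Module A M] : ℕ∞ :=
  sInf {n : ℕ∞ | ∃ i : ℕ, n = (i : ℕ∞) ∧
    ¬ extV A (ModuleCat.of A (IsLocalRing.ResidueField A)) (ModuleCat.of A M) i}

/-- The residue field `k(p)` of `R_p`, as an `R`-module. -/
abbrev resField (R : Type) [CommRing R] (p : PrimeSpectrum R) : Type :=
  LocalizedModule p.asIdeal.primeCompl (R ⧸ p.asIdeal)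

/-- `depth(R_p)`. -/
def ringDepthAt (R : Type) [CommRing R] (p : PrimeSpectrum R) : ℕ∞ :=
  rdepth (Localization.AtPrime p.asIdeal) (Localization.AtPrime p.asIdeal)

/-- `depth_{R_p}(M_p)`. -/
def depthAt (R : Type) [CommRing R] (p : PrimeSpectrum R) (M : Type) [AddCommGroup M]
    [Module R M] : ℕ∞ :=
  rdepth (Localization.AtPrime p.asIdeal) (LocalizedModule p.asIdeal.primeCompl M)

/-- `f : M →ₗ[R] E` exhibits `E` as an injective envelope of `M`: `E` is injective and
`f` is an essential monomorphism. -/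
def IsInjectiveEnvelope (R : Type) [Ring R] {M E : Type} [AddCommGroup M] [Module R M]
    [AddCommGroup E] [Module R E] (f : M →ₗ[R] E) : Prop :=
  Module.Injective R E ∧ Function.Injective f ∧
    ∀ K : Submodule R E, K ≠ ⊥ → K ⊓ LinearMap.range f ≠ ⊥

/-!
Localization keeps `M_p` in the class `𝒞`: it is a tensor product with a flat module, and such
tensor products stay left orthogonal to pure-injective modules. Let `A = R_p` have maximal ideal
`m`, let `Y` be one of the cogenerating modules, and consider the ungraded Koszul complex of
generators of `m` on `M_p`, whose terms are sums of copies of `M_p`, so that all their positive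
`Ext` groups into `Y` vanish. Its homology is killed by `m`, and the `m`-torsion of `M_p`, which is
nonzero since `p` is associated to `M`, is a retract of its cocycles. The homology and the
`m`-torsion are thus vector spaces over `k(p)`. If `Ext^i(k(p), Y) = 0` for all `i > n + 1`,
dimension shifting through the cocycles gives `Ext^(n+1)` vanishing for the `m`-torsion, hence for
its direct summand `k(p)`. This descending induction starts above the injective dimension of `Y`.
-/

open CategoryTheory.Abelian TensorProduct

universe u

section ExtVanishing

/-- Vanishing of `Ext^n_R(X, Y)`. The first argument is an unbundled module, so that it can range
over the spaces built by linear algebra; `Abelian.Ext` is used because it has long exact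
sequences. -/
def ExtVanishes {R : Type u} [Ring R] (X : Type u) [AddCommGroup X] [Module R X]
    (Y : ModuleCat.{u} R) (n : ℕ) : Prop :=
  Subsingleton (Abelian.Ext.{u} (ModuleCat.of R X) Y n)

theorem extV_succ_iff_extVanishes {R : Type} [Ring R] (X Y : ModuleCat.{0} R) (n : ℕ) :
    extV R X Y (n + 1) ↔ ExtVanishes X Y (n + 1) := by
  let P := projectiveResolution X
  have cocycles_lift : extV R X Y (n + 1) ↔ ∀ f : P.complex.X (n + 1) ⟶ Y,
      P.complex.d (n + 2) (n + 1) ≫ f = 0 → ∃ g : P.complex.X n ⟶ Y,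
        P.complex.d (n + 1) n ≫ g = f := by
    rw [extV, (P.isoExt (R := ℤ) (n + 1) Y).toLinearEquiv.toEquiv.subsingleton_congr,
      ← ModuleCat.isZero_iff_subsingleton,
      ← HomologicalComplex.exactAt_iff_isZero_homology,
      HomologicalComplex.exactAt_iff' _ n (n + 1) (n + 2) (by simp) (by simp),
      ShortComplex.moduleCat_exact_iff]
    rfl
  rw [cocycles_lift]
  constructor
  · intro h
    refine subsingleton_of_forall_eq 0 fun x ↦ ?_
    obtain ⟨f, hf, rfl⟩ := P.extMk_surjective x (n + 2) rfl
    exact (P.extMk_eq_zero_iff f _ rfl hf n rfl).2 (h f hf)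
  · intro h f hf
    exact (P.extMk_eq_zero_iff f (n + 2) rfl hf n rfl).1 (h.elim _ _)

theorem injDimLE.hasInjectiveDimensionLT {R : Type} [Ring R] {Y : ModuleCat.{0} R} {n : ℕ}
    (h : injDimLE R Y n) : HasInjectiveDimensionLT Y (n + 1) := by
  refine HasInjectiveDimensionLT.mk fun i hi X e ↦ ?_
  obtain ⟨i, rfl⟩ := Nat.exists_eq_add_of_lt hi
  exact ((extV_succ_iff_extVanishes X Y (n + i)).1 (h X _ (by lia))).elim e 0

namespace ExtVanishes

section Algebra

variable {R A : Type u} [CommRing R] [Ring A] [Algebra R A] {Y : ModuleCat.{u} R} {n : ℕ}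
  {X₁ X₂ X₃ : Type u} [AddCommGroup X₁] [Module R X₁] [Module A X₁] [IsScalarTower R A X₁]
  [AddCommGroup X₂] [Module R X₂] [Module A X₂] [IsScalarTower R A X₂]
  [AddCommGroup X₃] [Module R X₃] [Module A X₃] [IsScalarTower R A X₃]

theorem of_shortExact_left (f : X₁ →ₗ[A] X₂) (g : X₂ →ₗ[A] X₃) (hf : Function.Injective f)
    (hg : Function.Surjective g) (hfg : Function.Exact f g)
    (h₂ : ExtVanishes X₂ Y n) (h₃ : ExtVanishes X₃ Y (n + 1)) : ExtVanishes X₁ Y n := by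
  have hS := ModuleCat.shortComplex_shortExact
    (.mk (ModuleCat.ofHom (f.restrictScalars R)) (ModuleCat.ofHom (g.restrictScalars R))
      (ModuleCat.hom_ext (LinearMap.ext hfg.apply_apply_eq_zero))) hfg hf hg
  refine subsingleton_of_forall_eq 0 fun x ↦ ?_
  obtain ⟨y, rfl⟩ := Ext.contravariant_sequence_exact₁ hS Y x (add_comm 1 n) (h₃.elim _ _)
  rw [h₂.elim y 0, Ext.comp_zero]

theorem of_retract (h : ExtVanishes X₂ Y n) (i : X₁ →ₗ[A] X₂) (r : X₂ →ₗ[A] X₁)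
    (hri : r ∘ₗ i = LinearMap.id) : ExtVanishes X₁ Y n := by
  let i' := ModuleCat.ofHom (i.restrictScalars R)
  let r' := ModuleCat.ofHom (r.restrictScalars R)
  have hir : i' ≫ r' = 𝟙 _ := ModuleCat.hom_ext (congrArg (LinearMap.restrictScalars R) hri)
  refine subsingleton_of_forall_eq 0 fun x ↦ ?_
  calc x = (Ext.mk₀ (i' ≫ r')).comp x (zero_add n) := by rw [hir, Ext.mk₀_id_comp]
    _ = (Ext.mk₀ i').comp ((Ext.mk₀ r').comp x (zero_add n)) (zero_add n) :=
        (Ext.mk₀_comp_mk₀_assoc _ _ _).symm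
    _ = 0 := by rw [h.elim ((Ext.mk₀ r').comp x (zero_add n)) 0, Ext.comp_zero]

theorem of_linearEquiv (h : ExtVanishes X₂ Y n) (e : X₁ ≃ₗ[A] X₂) : ExtVanishes X₁ Y n :=
  h.of_retract e.toLinearMap e.symm.toLinearMap e.symm_comp

end Algebra

theorem finsupp {R : Type u} [Ring R] {X : Type u} [AddCommGroup X] [Module R X]
    {Y : ModuleCat.{u} R} (ι : Type u) {n : ℕ} (h : ExtVanishes X Y (n + 1)) :
    ExtVanishes (ι →₀ X) Y (n + 1) := by
  let I := InjectiveResolution.of Y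
  refine subsingleton_of_forall_eq 0 fun x ↦ ?_
  obtain ⟨f, hf, rfl⟩ := I.extMk_surjective x (n + 2) rfl
  have lift_component (i : ι) : ∃ g : ModuleCat.of R X ⟶ I.cocomplex.X n,
      g ≫ I.cocomplex.d n (n + 1) = ModuleCat.ofHom (Finsupp.lsingle i) ≫ f :=
    (I.extMk_eq_zero_iff _ (n + 2) rfl (by rw [Category.assoc, hf, Limits.comp_zero]) n rfl).1
      (h.elim _ _)
  choose g hg using lift_component
  refine (I.extMk_eq_zero_iff f (n + 2) rfl hf n rfl).2
    ⟨ModuleCat.ofHom (Finsupp.lsum ℕ fun i ↦ (g i).hom), ?_⟩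
  ext i x
  simpa using congr($(hg i) x)

theorem tensor_of_free {R A N E : Type u} [CommRing R] [CommRing A] [Algebra R A]
    [AddCommGroup N] [Module R N] [Module A N] [IsScalarTower R A N] [AddCommGroup E] [Module A E]
    [Module.Free A E] {Y : ModuleCat.{u} R} {n : ℕ} (h : ExtVanishes N Y (n + 1)) :
    ExtVanishes (N ⊗[A] E) Y (n + 1) := by
  classical
  exact (h.finsupp _).of_linearEquiv
    (TensorProduct.equivFinsuppOfBasisRight (Module.Free.chooseBasis A E))

end ExtVanishes

end ExtVanishing

section PureInjective

variable {R : Type} [CommRing R] {Y : ModuleCat.{0} R}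
  {X X₁ X₂ X₃ : Type} [AddCommGroup X] [Module R X] [AddCommGroup X₁] [Module R X₁]
  [AddCommGroup X₂] [Module R X₂] [AddCommGroup X₃] [Module R X₃]

theorem PureInjective.extVanishes_one_of_isPureMono (hY : PureInjective R Y) (f : X₁ →ₗ[R] X₂)
    (g : X₂ →ₗ[R] X₃) (hf : IsPureMono R f) (hg : Function.Surjective g)
    (hfg : Function.Exact f g) (h₂ : ExtVanishes X₂ Y 1) : ExtVanishes X₃ Y 1 := by
  have hS := ModuleCat.shortComplex_shortExact
    (.mk (ModuleCat.ofHom f) (ModuleCat.ofHom g)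
      (ModuleCat.hom_ext hfg.linearMap_comp_eq_zero)) hfg hf.1 hg
  refine subsingleton_of_forall_eq 0 fun x ↦ ?_
  obtain ⟨y, rfl⟩ := Ext.contravariant_sequence_exact₃ hS Y x (h₂.elim _ _) (add_zero 1)
  obtain ⟨φ, rfl⟩ := Ext.addEquiv₀.symm.surjective y
  obtain ⟨ψ, hψ⟩ := hY X₁ X₂ f hf φ.hom
  obtain rfl : ModuleCat.ofHom f ≫ ModuleCat.ofHom ψ = φ := ModuleCat.hom_ext hψ
  rw [Ext.addEquiv₀_symm_apply, ← Ext.mk₀_comp_mk₀, ← Ext.comp_assoc_of_second_deg_zero]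
  exact (congrArg (Ext.comp · _ _) hS.extClass_comp).trans (Ext.zero_comp ..)

theorem IsPureMono.lTensor_of_exact_of_flat [Module.Flat R X₃] (f : X₁ →ₗ[R] X₂)
    (g : X₂ →ₗ[R] X₃) (hf : Function.Injective f) (hg : Function.Surjective g)
    (hfg : Function.Exact f g) : IsPureMono R (f.lTensor X) := by
  have lTensor_injective (Q : Type) [AddCommGroup Q] [Module R Q] :
      Function.Injective (f.lTensor Q) :=
    LinearMap.lTensor_injective_of_exact_of_flat g hg f hf hfg Q
  refine ⟨lTensor_injective X, fun Q _ _ ↦ ?_⟩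
  have h := lTensor_injective (Q ⊗[R] X)
  rw [LinearMap.lTensor_tensor] at h
  simpa using h

theorem PureInjective.extVanishes_one_tensor_of_surjective [Module.Flat R X₃]
    (hY : PureInjective R Y) (g : X₂ →ₗ[R] X₃) (hg : Function.Surjective g)
    (h₂ : ExtVanishes (X ⊗[R] X₂) Y 1) : ExtVanishes (X ⊗[R] X₃) Y 1 := by
  have exact_ker : Function.Exact (LinearMap.ker g).subtype g := g.exact_subtype_ker_map
  have pure_ker := IsPureMono.lTensor_of_exact_of_flat (X := X) (LinearMap.ker g).subtype g
    (LinearMap.ker g).injective_subtype hg exact_ker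
  exact hY.extVanishes_one_of_isPureMono ((LinearMap.ker g).subtype.lTensor X) (g.lTensor X)
    pure_ker (LinearMap.lTensor_surjective X hg) (lTensor_exact X exact_ker hg) h₂

theorem PureInjective.extVanishes_one_tensor_of_flat (hY : PureInjective R Y) (F : Type)
    [AddCommGroup F] [Module R F] [Module.Flat R F] (hX : ExtVanishes X Y 1) :
    ExtVanishes (F ⊗[R] X) Y 1 :=
  (hY.extVanishes_one_tensor_of_surjective (Finsupp.linearCombination R id)
    (Finsupp.linearCombination_id_surjective R F) hX.tensor_of_free).of_linearEquiv
      (TensorProduct.comm R F X)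

end PureInjective

section VectorSpace

variable {R A K : Type u} [CommRing R] {Y : ModuleCat.{u} R} {V V' : Type u} [AddCommGroup V]
  [Module R V] [AddCommGroup V'] [Module R V']

theorem ExtVanishes.of_nontrivial_vectorSpace [Field K] [Algebra R K] [Module K V]
    [IsScalarTower R K V] [Module K V'] [IsScalarTower R K V'] [Nontrivial V] {n : ℕ}
    (h : ExtVanishes V Y (n + 1)) : ExtVanishes V' Y (n + 1) := by
  obtain ⟨v, hv⟩ := exists_ne (0 : V)
  obtain ⟨r, hr⟩ := (LinearMap.toSpanSingleton K V v).exists_leftInverse_of_injective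
    (LinearMap.ker_toSpanSingleton K hv)
  have field_vanishes : ExtVanishes K Y (n + 1) :=
    h.of_retract (LinearMap.toSpanSingleton K V v) r hr
  exact (field_vanishes.finsupp _).of_linearEquiv (Module.Basis.ofVectorSpace K V').repr

theorem ExtVanishes.of_isTorsionBySet_isMaximal [CommRing A] [Algebra R A] [Module A V]
    [IsScalarTower R A V] [Module A V'] [IsScalarTower R A V'] [Nontrivial V]
    (m : Ideal A) [m.IsMaximal] (hV : Module.IsTorsionBySet A V m)
    (hV' : Module.IsTorsionBySet A V' m) {n : ℕ} (h : ExtVanishes V Y (n + 1)) :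
    ExtVanishes V' Y (n + 1) := by
  let := Ideal.Quotient.field m
  let := hV.module
  let := hV'.module
  have : IsScalarTower R (A ⧸ m) V := hV.isScalarTower
  have : IsScalarTower R (A ⧸ m) V' := hV'.isScalarTower
  exact h.of_nontrivial_vectorSpace (K := A ⧸ m)

end VectorSpace

section DifferentialModule

variable {R A : Type u} [CommRing R] [Ring A] [Algebra R A] {X : Type u} [AddCommGroup X]
  [Module A X] [Module R X] [IsScalarTower R A X]

/-- The homology `ker d / im d` of a differential module `(X, d)`, i.e. of a module with an
endomorphism of square zero. No grading is involved. -/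
abbrev DifferentialHomology {A X : Type*} [Ring A] [AddCommGroup X] [Module A X]
    (d : X →ₗ[A] X) : Type _ :=
  LinearMap.ker d ⧸ (LinearMap.range d).submoduleOf (LinearMap.ker d)

variable {Y : ModuleCat.{u} R}

theorem ExtVanishes.submodule_of_quotient (P : Submodule A X) {n : ℕ} (hX : ExtVanishes X Y n)
    (hQ : ExtVanishes (X ⧸ P) Y (n + 1)) : ExtVanishes P Y n :=
  of_shortExact_left P.subtype P.mkQ P.injective_subtype P.mkQ_surjective
    (LinearMap.exact_subtype_mkQ P) hX hQ

theorem ExtVanishes.ker_of_differentialHomology (D : ℕ) [HasInjectiveDimensionLT Y D]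
    (d : X →ₗ[A] X) (hd : d ∘ₗ d = 0) {n : ℕ} (hX : ∀ i ≥ n, ExtVanishes X Y i)
    (hH : ∀ i ≥ n + 2, ExtVanishes (DifferentialHomology d) Y i) :
    ExtVanishes (LinearMap.ker d) Y n := by
  have range_le_ker : LinearMap.range d ≤ LinearMap.ker d := LinearMap.range_le_ker_iff.2 hd
  have ker_vanishes {i : ℕ} (hi : n ≤ i) (h : ExtVanishes (LinearMap.range d) Y (i + 1)) :
      ExtVanishes (LinearMap.ker d) Y i :=
    (hX i hi).submodule_of_quotient _ (h.of_linearEquiv d.quotKerEquivRange)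
  have range_vanishes {i : ℕ} (hi : n ≤ i) (h : ExtVanishes (LinearMap.ker d) Y (i + 1)) :
      ExtVanishes (LinearMap.range d) Y (i + 1) :=
    (h.submodule_of_quotient _ (hH _ (by lia))).of_linearEquiv
      (Submodule.submoduleOfEquivOfLe range_le_ker).symm
  suffices ∀ i, n ≤ i → ExtVanishes (LinearMap.ker d) Y i from this n le_rfl
  refine Nat.strong_decreasing_induction ⟨D, fun i hi _ ↦ ?_⟩ fun i ih hi ↦ ?_
  · exact HasInjectiveDimensionLT.subsingleton Y D i hi.le _
  · exact ker_vanishes hi (range_vanishes hi (ih (i + 1) (by lia) (by lia)))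

end DifferentialModule

section Koszul

variable {A ι N : Type*} [CommRing A] [AddCommGroup N] [Module A N]

variable (N) in
/-- The differential of the Koszul complex of `N` and a family `a`. The complex is regarded as the
ungraded module `N ⊗ ⋀(A^ι)`, and the differential is left multiplication by the vector `a`. -/
def koszulDifferential (a : ι → A) :
    N ⊗[A] ExteriorAlgebra A (ι → A) →ₗ[A] N ⊗[A] ExteriorAlgebra A (ι → A) :=
  (LinearMap.mulLeft A (ExteriorAlgebra.ι A a)).lTensor N

variable (N) in
/-- Contraction of the Koszul complex with the `i`-th coordinate function. It is a contracting
homotopy for multiplication by `a i`. -/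
def koszulContraction (i : ι) :
    N ⊗[A] ExteriorAlgebra A (ι → A) →ₗ[A] N ⊗[A] ExteriorAlgebra A (ι → A) :=
  (CliffordAlgebra.contractLeft (LinearMap.proj i : (ι → A) →ₗ[A] A)).lTensor N

variable (ι N) in
/-- The projection of the Koszul complex onto its degree zero component `N`. -/
def koszulAugmentation : N ⊗[A] ExteriorAlgebra A (ι → A) →ₗ[A] N :=
  TensorProduct.rid A N ∘ₗ (ExteriorAlgebra.algebraMapInv (M := ι → A)).toLinearMap.lTensor N

theorem koszulDifferential_comp_self (a : ι → A) :
    koszulDifferential N a ∘ₗ koszulDifferential N a = 0 := by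
  rw [koszulDifferential, ← LinearMap.lTensor_comp, ← LinearMap.mulLeft_mul,
    ExteriorAlgebra.ι_sq_zero, LinearMap.mulLeft_zero_eq_zero, LinearMap.lTensor_zero]

theorem koszulContraction_comp_differential_add (a : ι → A) (i : ι) :
    koszulContraction N i ∘ₗ koszulDifferential N a +
      koszulDifferential N a ∘ₗ koszulContraction N i = a i • LinearMap.id := by
  have leibniz : CliffordAlgebra.contractLeft (LinearMap.proj i : (ι → A) →ₗ[A] A) ∘ₗ
        LinearMap.mulLeft A (ExteriorAlgebra.ι A a) + LinearMap.mulLeft A (ExteriorAlgebra.ι A a) ∘ₗ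
        CliffordAlgebra.contractLeft (LinearMap.proj i : (ι → A) →ₗ[A] A) =
      a i • LinearMap.id :=
    LinearMap.ext fun y ↦ add_eq_of_eq_sub (CliffordAlgebra.contractLeft_ι_mul _ a y)
  rw [koszulContraction, koszulDifferential, ← LinearMap.lTensor_comp, ← LinearMap.lTensor_comp,
    ← LinearMap.lTensor_add, leibniz, LinearMap.lTensor_smul, LinearMap.lTensor_id]

theorem koszulAugmentation_comp_differential (a : ι → A) :
    koszulAugmentation ι N ∘ₗ koszulDifferential N a = 0 := by
  have algebraMapInv_ι : ExteriorAlgebra.algebraMapInv (ExteriorAlgebra.ι A a) = 0 :=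
    ExteriorAlgebra.lift_ι_apply ..
  refine TensorProduct.ext' fun v y ↦ ?_
  simp [koszulAugmentation, koszulDifferential, algebraMapInv_ι]

theorem koszulAugmentation_tmul_one (v : N) : koszulAugmentation ι N (v ⊗ₜ[A] 1) = v := by
  simp [koszulAugmentation]

theorem koszulDifferential_tmul_one [Finite ι] {a : ι → A} {v : N} (hv : ∀ i, a i • v = 0) :
    koszulDifferential N a (v ⊗ₜ 1) = 0 := by
  classical
  have := Fintype.ofFinite ι
  rw [koszulDifferential, LinearMap.lTensor_tmul, LinearMap.mulLeft_apply, mul_one,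
    pi_eq_sum_univ a, map_sum, TensorProduct.tmul_sum]
  exact Finset.sum_eq_zero fun i _ ↦ by
    rw [map_smul, ← TensorProduct.smul_tmul, hv, TensorProduct.zero_tmul]

theorem smul_mem_range_koszulDifferential {a : ι → A}
    {x : N ⊗[A] ExteriorAlgebra A (ι → A)} (hx : koszulDifferential N a x = 0) (i : ι) :
    a i • x ∈ LinearMap.range (koszulDifferential N a) := by
  have h := LinearMap.congr_fun (koszulContraction_comp_differential_add a i) x
  simp only [LinearMap.add_apply, LinearMap.comp_apply, hx, map_zero, zero_add] at h
  exact ⟨_, h⟩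

theorem isTorsionBySet_koszulHomology (a : ι → A) :
    Module.IsTorsionBySet A (DifferentialHomology (koszulDifferential N a)) (Set.range a) := by
  rintro x ⟨_, i, rfl⟩
  obtain ⟨⟨x, hx⟩, rfl⟩ := Submodule.mkQ_surjective _ x
  rw [← map_smul]
  exact (Submodule.Quotient.mk_eq_zero _).2 (smul_mem_range_koszulDifferential hx i)

theorem smul_koszulAugmentation_eq_zero {a : ι → A}
    {x : N ⊗[A] ExteriorAlgebra A (ι → A)} (hx : koszulDifferential N a x = 0) (i : ι) :
    a i • koszulAugmentation ι N x = 0 := by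
  obtain ⟨y, hy⟩ := smul_mem_range_koszulDifferential hx i
  rw [← map_smul, ← hy]
  exact LinearMap.congr_fun (koszulAugmentation_comp_differential a) y

variable (N) in
/-- The inclusion of the degree zero Koszul cocycles, the elements of `N` killed by the family. -/
def torsionToKoszulCocycles [Finite ι] (a : ι → A) :
    Submodule.torsionBySet A N (Set.range a) →ₗ[A] LinearMap.ker (koszulDifferential N a) :=
  (((TensorProduct.mk A N _).flip 1) ∘ₗ Submodule.subtype _).codRestrict _ fun v ↦
    koszulDifferential_tmul_one fun i ↦ (Submodule.mem_torsionBySet_iff _ _).1 v.2 ⟨_, i, rfl⟩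

variable (N) in
/-- The projection of Koszul cocycles onto their degree zero component. -/
def koszulCocyclesToTorsion (a : ι → A) :
    LinearMap.ker (koszulDifferential N a) →ₗ[A] Submodule.torsionBySet A N (Set.range a) :=
  (koszulAugmentation ι N ∘ₗ Submodule.subtype _).codRestrict _ fun x ↦
    (Submodule.mem_torsionBySet_iff _ _).2 fun ⟨_, i, hi⟩ ↦
      hi ▸ smul_koszulAugmentation_eq_zero x.2 i

theorem koszulCocyclesToTorsion_comp_torsionToKoszulCocycles [Finite ι] (a : ι → A) :
    koszulCocyclesToTorsion N a ∘ₗ torsionToKoszulCocycles N a = LinearMap.id :=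
  LinearMap.ext fun v ↦ Subtype.ext (koszulAugmentation_tmul_one v.1)

end Koszul

section ResidueField

variable {R A : Type u} [CommRing R] [CommRing A] [Algebra R A] {Y : ModuleCat.{u} R}
  {N : Type u} [AddCommGroup N] [Module R N] [Module A N] [IsScalarTower R A N]

theorem ExtVanishes.torsionBySet_range (D : ℕ) [HasInjectiveDimensionLT Y D]
    (hN : ∀ n, ExtVanishes N Y (n + 1)) {r : ℕ} (a : Fin r → A) {n : ℕ}
    (hH : ∀ i > n, ExtVanishes (DifferentialHomology (koszulDifferential N a)) Y (i + 1)) :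
    ExtVanishes (Submodule.torsionBySet A N (Set.range a)) Y (n + 1) := by
  have : Module.Free A (ExteriorAlgebra A (Fin r → A)) :=
    .of_basis (Pi.basisFun A (Fin r)).ExteriorAlgebra
  have koszul_vanishes (i : ℕ) (hi : i ≥ n + 1) :
      ExtVanishes (N ⊗[A] ExteriorAlgebra A (Fin r → A)) Y i := by
    obtain ⟨i, rfl⟩ := Nat.exists_eq_succ_of_ne_zero (Nat.ne_zero_of_lt hi)
    exact (hN i).tensor_of_free
  have homology_vanishes (i : ℕ) (hi : i ≥ n + 3) :
      ExtVanishes (DifferentialHomology (koszulDifferential N a)) Y i := by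
    obtain ⟨i, rfl⟩ := Nat.exists_eq_succ_of_ne_zero (Nat.ne_zero_of_lt hi)
    exact hH i (by lia)
  have ker_vanishes : ExtVanishes (LinearMap.ker (koszulDifferential N a)) Y (n + 1) :=
    ker_of_differentialHomology (n := n + 1) (Y := Y) D (koszulDifferential N a)
      (koszulDifferential_comp_self a) koszul_vanishes homology_vanishes
  exact ker_vanishes.of_retract (torsionToKoszulCocycles N a)
    (koszulCocyclesToTorsion N a) (koszulCocyclesToTorsion_comp_torsionToKoszulCocycles a)

theorem ExtVanishes.of_isTorsionBySet_of_torsionBySet_nontrivial (D : ℕ)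
    [HasInjectiveDimensionLT Y D] (hN : ∀ n, ExtVanishes N Y (n + 1)) {m : Ideal A}
    [m.IsMaximal] (hm : m.FG) [Nontrivial (Submodule.torsionBySet A N m)] (n : ℕ)
    {V : Type u} [AddCommGroup V] [Module R V] [Module A V] [IsScalarTower R A V]
    (hV : Module.IsTorsionBySet A V m) :
    ExtVanishes V Y (n + 1) := by
  obtain ⟨r, a, rfl⟩ := Submodule.fg_iff_exists_fin_generating_family.1 hm
  have torsion_eq := Submodule.torsionBySet_eq_torsionBySet_span (M := N) (Set.range a)
  induction n using Nat.strong_decreasing_induction generalizing V with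
  | base => exact ⟨D, fun i hi V _ _ _ _ _ ↦
      HasInjectiveDimensionLT.subsingleton Y D (i + 1) (by lia) _⟩
  | step n ih =>
    have homology_vanishes (i : ℕ) (hi : i > n) :
        ExtVanishes (DifferentialHomology (koszulDifferential N a)) Y (i + 1) :=
      ih i hi (Module.isTorsionBySet_iff_is_torsion_by_span _ |>.1 <|
        isTorsionBySet_koszulHomology a)
    have torsion_vanishes := torsionBySet_range D hN a homology_vanishes
    rw [torsion_eq] at torsion_vanishes
    exact torsion_vanishes.of_isTorsionBySet_isMaximal _
      (Submodule.torsionBySet_isTorsionBySet _) hV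

end ResidueField

section AssociatedPrime

theorem torsionBySet_pow_eq_bot {R M : Type*} [CommRing R] [AddCommGroup M] [Module R M]
    {I : Ideal R} (h : Submodule.torsionBySet R M I = ⊥) (k : ℕ) :
    Submodule.torsionBySet R M (I ^ k : Ideal R) = ⊥ := by
  induction k with
  | zero => simp [Ideal.one_eq_top]
  | succ k ih =>
    refine (Submodule.eq_bot_iff _).2 fun x hx ↦ ?_
    rw [Submodule.mem_torsionBySet_iff] at hx
    have smul_mem (b : (I ^ k : Ideal R)) : (b : R) • x ∈ Submodule.torsionBySet R M I := by
      refine (Submodule.mem_torsionBySet_iff _ _).2 fun a ↦ ?_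
      rw [smul_smul]
      exact hx ⟨a * b, pow_succ' I k ▸ Ideal.mul_mem_mul a.2 b.2⟩
    rw [← Submodule.mem_bot R, ← ih, Submodule.mem_torsionBySet_iff]
    exact fun b ↦ (Submodule.mem_bot R).1 (h ▸ smul_mem b)

theorem nontrivial_torsionBySet_of_mem_associatedPrimes {R M : Type*} [CommRing R]
    [AddCommGroup M] [Module R M] {p : Ideal R} (hp : p ∈ associatedPrimes R M) (hfg : p.FG) :
    Nontrivial (Submodule.torsionBySet R M p) := by
  obtain ⟨hprime, x, hx⟩ := hp
  obtain ⟨k, hk⟩ := Ideal.exists_pow_le_of_le_radical_of_fg hx.le hfg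
  rw [Submodule.nontrivial_iff_ne_bot]
  intro torsion_eq_bot
  have x_mem : x ∈ Submodule.torsionBySet R M (p ^ k : Ideal R) :=
    (Submodule.mem_torsionBySet_iff _ _).2 fun a ↦ Submodule.mem_colon_singleton.1 (hk a.2)
  rw [torsionBySet_pow_eq_bot torsion_eq_bot, Submodule.mem_bot] at x_mem
  exact hprime.ne_top (by simp [hx, x_mem])

theorem isTorsionBySet_maximalIdeal_resField {R : Type} [CommRing R] (p : PrimeSpectrum R) :
    Module.IsTorsionBySet (Localization.AtPrime p.asIdeal) (resField R p)
      (IsLocalRing.maximalIdeal (Localization.AtPrime p.asIdeal)) := by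
  rw [← Localization.AtPrime.map_eq_maximalIdeal, Ideal.map,
    ← Module.isTorsionBySet_iff_is_torsion_by_span]
  have isTorsion_quotient : Module.IsTorsionBySet R (R ⧸ p.asIdeal) p.asIdeal :=
    (Module.isTorsionBySet_quotient_iff _ _).2 fun b _ ha ↦ p.asIdeal.mul_mem_right b ha
  rintro x ⟨_, a, ha, rfl⟩
  induction x using LocalizedModule.induction_on with
  | h y s =>
    have smul_eq_zero : a • y = 0 := @isTorsion_quotient y ⟨a, ha⟩
    rw [algebraMap_smul, LocalizedModule.smul'_mk, smul_eq_zero, LocalizedModule.zero_mk]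

end AssociatedPrime

section CotorsionPair

variable {R : Type} [CommRing R]

theorem of_mem_leftPerp1_iff {𝒳 : Set (ModuleCat.{0} R)} {M : Type} [AddCommGroup M] [Module R M] :
    ModuleCat.of R M ∈ leftPerp1 R 𝒳 ↔ ∀ Y ∈ 𝒳, ExtVanishes M Y 1 :=
  forall₂_congr fun Y _ ↦ extV_succ_iff_extVanishes (ModuleCat.of R M) Y 0

theorem IsHereditaryCotorsionPair.extVanishes {𝒞 𝒲 𝒳 : Set (ModuleCat.{0} R)}
    (hpair : IsHereditaryCotorsionPair R 𝒞 𝒲) (h𝒳 : 𝒞 = leftPerp1 R 𝒳)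
    {X Y : ModuleCat.{0} R} (hX : X ∈ 𝒞) (hY : Y ∈ 𝒳) (n : ℕ) :
    ExtVanishes X Y (n + 1) := by
  have mem_right : Y ∈ 𝒲 := by
    rw [hpair.1.2]
    intro Z hZ
    rw [h𝒳] at hZ
    exact hZ Y hY
  exact (extV_succ_iff_extVanishes X Y n).1 (hpair.2 X hX Y mem_right (n + 1) (by lia))

theorem tensor_mem_leftPerp1 {𝒳 : Set (ModuleCat.{0} R)} (h𝒳 : ∀ Y ∈ 𝒳, PureInjective R Y)
    (F : Type) [AddCommGroup F] [Module R F] [Module.Flat R F] {M : ModuleCat.{0} R}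
    (hM : M ∈ leftPerp1 R 𝒳) : ModuleCat.of R (F ⊗[R] M) ∈ leftPerp1 R 𝒳 := by
  rw [of_mem_leftPerp1_iff]
  intro Y hY
  exact (h𝒳 Y hY).extVanishes_one_tensor_of_flat F (of_mem_leftPerp1_iff.1 hM Y hY)

end CotorsionPair

theorem stmt9_general (R : Type) [CommRing R] (𝒞 𝒲 Pcl : Set (ModuleCat.{0} R))
    (hpair : IsHereditaryCotorsionPair R 𝒞 𝒲) (hP : Pcl ⊆ PIFinInj R)
    (hcogen : 𝒞 = leftPerp1 R Pcl) (M : ModuleCat.{0} R) (hM : M ∈ 𝒞) (p : PrimeSpectrum R)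
    (hfg : p.asIdeal.FG) (hp : p.asIdeal ∈ associatedPrimes R M) :
    ModuleCat.of R (resField R p) ∈ 𝒞 := by
  let A := Localization.AtPrime p.asIdeal
  let m := IsLocalRing.maximalIdeal A
  have map_eq : p.asIdeal.map (algebraMap R A) = m := Localization.AtPrime.map_eq_maximalIdeal
  have comap_eq : m.comap (algebraMap R A) = p.asIdeal := Localization.AtPrime.under_maximalIdeal
  have m_fg : m.FG := map_eq ▸ hfg.map _
  have : Module.Flat R A := IsLocalization.flat A p.asIdeal.primeCompl
  have localization_mem : ModuleCat.of R (A ⊗[R] M) ∈ 𝒞 :=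
    hcogen ▸ tensor_mem_leftPerp1 (fun Y hY ↦ (hP hY).1) A (hcogen ▸ hM)
  have m_associated : m ∈ associatedPrimes A (A ⊗[R] M) :=
    Module.associatedPrimes.mem_associatedPrimes_of_comap_mem_associatedPrimes_of_isLocalizedModule
      p.asIdeal.primeCompl (TensorProduct.mk R A M 1) m (comap_eq.symm ▸ hp)
  have torsion_nontrivial := nontrivial_torsionBySet_of_mem_associatedPrimes m_associated m_fg
  rw [hcogen, of_mem_leftPerp1_iff]
  intro Y hY
  obtain ⟨D, hD⟩ := (hP hY).2
  have injDim_lt := hD.hasInjectiveDimensionLT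
  exact .of_isTorsionBySet_of_torsionBySet_nontrivial (D + 1)
    (fun n ↦ hpair.extVanishes hcogen localization_mem hY n) m_fg 0
    (isTorsionBySet_maximalIdeal_resField p)

/-- if `(𝒞, 𝒲)` is a hereditary cotorsion pair over a commutative noetherian
ring cogenerated by a class of pure-injective modules of finite injective dimension, then
for every `M ∈ 𝒞` and every associated prime `p` of `M`, the residue field `k(p)`
belongs to `𝒞`. -/
theorem stmt9 (R : Type) [CommRing R] [IsNoetherianRing R]
    (𝒞 𝒲 Pcl : Set (ModuleCat.{0} R))
    (hpair : IsHereditaryCotorsionPair R 𝒞 𝒲)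
    (hP : Pcl ⊆ PIFinInj R)
    (hcogen : 𝒞 = leftPerp1 R Pcl) :
    ∀ M ∈ 𝒞, ∀ p : PrimeSpectrum R, p.asIdeal ∈ associatedPrimes R ↥M →
      ModuleCat.of R (resField R p) ∈ 𝒞 := by
  intro M hM p hp
  exact stmt9_general R 𝒞 𝒲 Pcl hpair hP hcogen M hM p (IsNoetherian.noetherian _) hp
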